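/- arXiv:1911.05966 — 2 statements merged into one kernel-verified Lean document; each statement's English description precedes it below -/
import Mathlib

section
/- Let N ≥ 1, 0 < s < 1, η(x) = (1+|x|²)^{-(N+2s)/2}, and let φ ∈ C_c^∞(ℝ) satisfy φ(t) = 1 for |t| ≤ 1 and φ(t) = 0 for |t| > 2; for R ≥ 1 set φ_R(x) = φ(|x|/R). Define I(x) = ∫_{ℝ^N} (η(x)−η(y))(φ_R(x)−φ_R(y))/|x−y|^{N+2s} dy. Then there exists C > 0, independent of R and x, such that |I(x)| ≤ C(1 + R^{-2s}) η(x) for all x ∈ ℝ^N and all R ≥ 1. -/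
/-! Write `p = N + 2s` and `D = ‖x - y‖`, and let `a = √(1+|x|²)`, `b = √(1+|y|²)`, so that
`η(x) = a⁻ᵖ`, `η(y) = b⁻ᵖ` and `|a - b| ≤ D`.

* Since `R ≥ 1`, the cutoff `φ_R` is bounded and Lipschitz uniformly in `R`, hence
  `|φ_R(x) - φ_R(y)| ≤ K min(1, D)` with `K` depending only on `φ` (`cutoff_diff_le`).
* The weight satisfies `|η(x) - η(y)| ≤ C η(x) (min(1, D) + η(y) Dᵖ)` (`fracEta_diff_le`):
  for `D ≤ 1/2` this follows from Bernoulli's inequality and `η(y) ≤ 2ᵖ η(x)`, and for larger `D`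
  from Peetre's inequality `aᵖ ≤ 2ᵖ (bᵖ + Dᵖ)`.

Therefore the integrand is at most `C K η(x) (min(1, D²) / Dᵖ + η(y))`. Both terms in the bracket
are integrable in `y`: the first because `N < p < N + 2` (`integrable_min_kernel`), the second
because `N < p`; and their integral does not depend on `x` or `R`. This gives `|I(x)| ≤ C' η(x)`,
which is stronger than the claim because `1 ≤ 1 + R^{-2s}`. -/

open MeasureTheory Filter Set

noncomputable section

/-- Euclidean space `ℝ^N`. -/
abbrev ES (N : ℕ) := EuclideanSpace ℝ (Fin N)

/-- The normalization constant `c_{N,s}` of the fractional Laplacian. -/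
def fracC (N : ℕ) (s : ℝ) : ℝ :=
  2 ^ (2 * s) * s * Real.Gamma ((N : ℝ) / 2 + s) /
    (Real.pi ^ ((N : ℝ) / 2) * Real.Gamma (1 - s))

/-- `HasFracLapAt N s u x v` means that the principal-value limit defining
`(-Δ)^s u (x)` exists and equals `v`:
`(-Δ)^s u (x) = c_{N,s} lim_{ε→0⁺} ∫_{ℝ^N ∖ B(x,ε)} (u x - u ξ)/|x-ξ|^{N+2s} dξ`. -/
def HasFracLapAt (N : ℕ) (s : ℝ) (u : ES N → ℝ) (x : ES N) (v : ℝ) : Prop :=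
  Filter.Tendsto
    (fun ε : ℝ => fracC N s *
      ∫ ξ in {ξ : ES N | ε < ‖x - ξ‖}, (u x - u ξ) / ‖x - ξ‖ ^ ((N : ℝ) + 2 * s))
    (nhdsWithin 0 (Set.Ioi 0)) (nhds v)

/-- The weight function `η(x) = (1+|x|²)^{-(N+2s)/2}`. -/
def fracEta (N : ℕ) (s : ℝ) (x : ES N) : ℝ :=
  (1 + ‖x‖ ^ 2) ^ (-(((N : ℝ) + 2 * s) / 2))

/-- `ρ_m(x) = (1+|x|²)^{-m/2}`. -/
def fracRho (N : ℕ) (m : ℝ) (x : ES N) : ℝ :=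
  (1 + ‖x‖ ^ 2) ^ (-(m / 2))

/-- Membership in `L_s(ℝ^N)`: locally integrable with
`∫ |u(x)|/(1+|x|)^{N+2s} dx < ∞`. -/
def MemLs (N : ℕ) (s : ℝ) (u : ES N → ℝ) : Prop :=
  MeasureTheory.LocallyIntegrable u volume ∧
    MeasureTheory.Integrable
      (fun x : ES N => |u x| / (1 + ‖x‖) ^ ((N : ℝ) + 2 * s)) volume

/-- Membership in the Hölder space `C^β(ℝ^N)` for `0 < β < 2`:
Hölder continuity of exponent `β` if `β ≤ 1`, and a Hölder continuous
derivative of exponent `β - 1` if `β > 1`. -/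
def MemCHolder {N : ℕ} (β : ℝ) (u : ES N → ℝ) : Prop :=
  (β ≤ 1 → ∃ C : NNReal, HolderWith C β.toNNReal u) ∧
  (1 < β → Differentiable ℝ u ∧
    ∃ C : NNReal, HolderWith C (β - 1).toNNReal (fderiv ℝ u))

/-- A solution of `(-Δ)^s u = e^u` on `ℝ^N`: a function
`u ∈ C^{2σ}(ℝ^N) ∩ L_s(ℝ^N)` for some `σ > s` satisfying the equation
pointwise. -/
def IsSolution (N : ℕ) (s : ℝ) (u : ES N → ℝ) : Prop :=
  (∃ σ : ℝ, s < σ ∧ MemCHolder (2 * σ) u) ∧ MemLs N s u ∧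
    ∀ x : ES N, HasFracLapAt N s u x (Real.exp (u x))

/-- Stability: `∫ e^u φ² ≤ (c_{N,s}/2) ∬ (φ(x)-φ(y))²/|x-y|^{N+2s}` for all
`φ ∈ C¹_c(ℝ^N)`. -/
def IsStable (N : ℕ) (s : ℝ) (u : ES N → ℝ) : Prop :=
  ∀ φ : ES N → ℝ, ContDiff ℝ 1 φ → HasCompactSupport φ →
    ∫ x : ES N, Real.exp (u x) * φ x ^ 2 ≤
      fracC N s / 2 *
        ∫ x : ES N, ∫ y : ES N, (φ x - φ y) ^ 2 / ‖x - y‖ ^ ((N : ℝ) + 2 * s)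

/-- Surface area `|S^{N-1}| = 2 π^{N/2} / Γ(N/2)` of the unit sphere in `ℝ^N`. -/
def sphArea (N : ℕ) : ℝ :=
  2 * Real.pi ^ ((N : ℝ) / 2) / Real.Gamma ((N : ℝ) / 2)

/-- The normalization constant `p(N,s)` of the Poisson kernel. -/
def poissonC (N : ℕ) (s : ℝ) : ℝ :=
  Real.Gamma (((N : ℝ) + 2 * s) / 2) / (Real.pi ^ ((N : ℝ) / 2) * Real.Gamma s)

/-- The Poisson kernel `P_s(x,t) = p(N,s) t^{2s} / (|x|²+t²)^{(N+2s)/2}`. -/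
def poissonKer (N : ℕ) (s : ℝ) (x : ES N) (t : ℝ) : ℝ :=
  poissonC N s * t ^ (2 * s) / (‖x‖ ^ 2 + t ^ 2) ^ (((N : ℝ) + 2 * s) / 2)

/-- The Caffarelli–Silvestre extension `U(x,t) = ∫ P_s(x-z,t) u(z) dz`. -/
def csExtension (N : ℕ) (s : ℝ) (u : ES N → ℝ) (x : ES N) (t : ℝ) : ℝ :=
  ∫ z : ES N, poissonKer N s (x - z) t * u z

/-- `ζ(x,t) = (1+|x|²+t²)^{-(N+2s)/4}`. -/
def csZeta (N : ℕ) (s : ℝ) (x : ES N) (t : ℝ) : ℝ :=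
  (1 + ‖x‖ ^ 2 + t ^ 2) ^ (-(((N : ℝ) + 2 * s) / 4))

/-- The squared (full) gradient `|∇F|²(x,t) = |∇_x F|² + |∂_t F|²` of a
function `F` on `ℝ^N × ℝ`. -/
def gradSqr (N : ℕ) (F : ES N → ℝ → ℝ) (x : ES N) (t : ℝ) : ℝ :=
  ‖fderiv ℝ (fun y => F y t) x‖ ^ 2 + (deriv (F x) t) ^ 2

/-- The singular kernel, truncated at scale one, is integrable when `N < p < N + 2`. -/
lemma integrable_min_kernel (N : ℕ) (hN : 1 ≤ N) (p : ℝ) (h1 : (N : ℝ) < p) (h2 : p < N + 2) :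
    Integrable (fun z : ES N => min 1 (‖z‖ ^ 2) / ‖z‖ ^ p) := by
  have : Nonempty (Fin N) := ⟨⟨0, hN⟩⟩
  have : Nontrivial (ES N) := inferInstance
  have hcast : ((N - 1 : ℕ) : ℝ) = (N : ℝ) - 1 := by push_cast [hN]; ring
  -- polar coordinates reduce the claim to a one-dimensional integral
  refine (integrable_fun_norm_addHaar (volume : Measure (ES N))
    (f := fun r : ℝ => min 1 (r ^ 2) / r ^ p)).2 ?_
  rw [finrank_euclideanSpace_fin, ← Ioc_union_Ioi_eq_Ioi (zero_le_one' ℝ)]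
  refine IntegrableOn.union ?_ ?_
  · have h : IntegrableOn (fun r : ℝ => r ^ ((N : ℝ) + 1 - p)) (Ioc 0 1) :=
      (intervalIntegrable_iff_integrableOn_Ioc_of_le zero_le_one).1
        (intervalIntegral.intervalIntegrable_rpow' (by linarith))
    refine h.congr_fun (fun r hr => ?_) measurableSet_Ioc
    have hr0 : 0 < r := hr.1
    have hm : min 1 (r ^ 2) = r ^ 2 := min_eq_right (by nlinarith [hr.1, hr.2])
    simp only [smul_eq_mul, hm]
    rw [← Real.rpow_natCast, ← Real.rpow_natCast, hcast, ← Real.rpow_sub hr0, ← Real.rpow_add hr0]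
    congr 1
    push_cast
    ring
  · have h : IntegrableOn (fun r : ℝ => r ^ ((N : ℝ) - 1 - p)) (Ioi 1) :=
      integrableOn_Ioi_rpow_of_lt (by linarith) zero_lt_one
    refine h.congr_fun (fun r hr => ?_) measurableSet_Ioi
    have hr1 : (1 : ℝ) < r := hr
    have hr0 : 0 < r := by linarith
    have hm : min 1 (r ^ 2) = 1 := min_eq_left (by nlinarith)
    simp only [smul_eq_mul, hm]
    rw [← Real.rpow_natCast, hcast, one_div, ← Real.rpow_neg hr0.le, ← Real.rpow_add hr0]
    congr 1

lemma fracEta_eq (N : ℕ) (s : ℝ) (x : ES N) :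
    fracEta N s x = √(1 + ‖x‖ ^ 2) ^ (-((N : ℝ) + 2 * s)) := by
  rw [fracEta, Real.sqrt_eq_rpow, ← Real.rpow_mul (by positivity)]
  congr 1
  ring

lemma bracket_le_add {N : ℕ} (x y : ES N) :
    √(1 + ‖x‖ ^ 2) ≤ √(1 + ‖y‖ ^ 2) + ‖x - y‖ := by
  have hb0 : 0 ≤ √(1 + ‖y‖ ^ 2) := Real.sqrt_nonneg _
  have hb : √(1 + ‖y‖ ^ 2) ^ 2 = 1 + ‖y‖ ^ 2 := Real.sq_sqrt (by positivity)
  have hyb : ‖y‖ ≤ √(1 + ‖y‖ ^ 2) := Real.le_sqrt_of_sq_le (by linarith)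
  have hx : ‖x‖ ≤ ‖x - y‖ + ‖y‖ := by simpa using norm_add_le (x - y) y
  refine Real.sqrt_le_iff.2 ⟨by positivity, ?_⟩
  nlinarith [norm_nonneg x, norm_nonneg y, norm_nonneg (x - y),
    mul_le_mul_of_nonneg_right hyb (norm_nonneg (x - y))]

/-- Bernoulli's inequality for negative powers. -/
lemma rpow_neg_sub_le {p a b : ℝ} (hp : 1 ≤ p) (ha : 1 ≤ a) (hb : 0 < b) :
    b ^ (-p) - a ^ (-p) ≤ p * b ^ (-p) * |a - b| := by
  have ha0 : 0 < a := by linarith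
  have hB : 1 + p * (b / a - 1) ≤ (b / a) ^ p := by
    have h := one_add_mul_self_le_rpow_one_add (s := b / a - 1)
      (by have := div_pos hb ha0; linarith) hp
    simpa using h
  have e : a ^ (-p) = b ^ (-p) * (b / a) ^ p := by
    rw [Real.div_rpow hb.le ha0.le, Real.rpow_neg ha0.le, Real.rpow_neg hb.le]
    have := Real.rpow_pos_of_pos hb p
    field_simp
  have hd : 1 - b / a ≤ |a - b| := by
    rw [one_sub_div ha0.ne']
    refine (div_le_div_of_nonneg_right (le_abs_self _) ha0.le).trans ?_
    exact div_le_self (abs_nonneg _) ha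
  have hbp : 0 < b ^ (-p) := Real.rpow_pos_of_pos hb _
  have h1 : 1 - (b / a) ^ p ≤ p * |a - b| := by
    have := mul_le_mul_of_nonneg_left hd (by linarith : 0 ≤ p)
    linarith
  have := mul_le_mul_of_nonneg_left h1 hbp.le
  rw [e]
  linarith

/-- Scalar form of the estimate on the weight, with `a`, `b` the Japanese brackets of the two points
and `D` their distance. -/
lemma rpow_neg_diff_le {p a b D : ℝ} (hp : 1 ≤ p) (ha : 1 ≤ a) (hb : 1 ≤ b) (hD : 0 ≤ D)
    (hab : |a - b| ≤ D) :
    |a ^ (-p) - b ^ (-p)| ≤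
      (p * 2 ^ p + 2 + 2 * 2 ^ p) * a ^ (-p) * (min 1 D + b ^ (-p) * D ^ p) := by
  have ha0 : 0 < a := by linarith
  have hb0 : 0 < b := by linarith
  have hA : 0 < a ^ (-p) := Real.rpow_pos_of_pos ha0 _
  have hB : 0 < b ^ (-p) := Real.rpow_pos_of_pos hb0 _
  have hT : (1 : ℝ) ≤ 2 ^ p := Real.one_le_rpow one_le_two (by linarith)
  have hDp : 0 ≤ D ^ p := Real.rpow_nonneg hD _
  have hAa : a ^ (-p) * a ^ p = 1 := by
    rw [← Real.rpow_add ha0, neg_add_cancel, Real.rpow_zero]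
  have hBb : b ^ (-p) * b ^ p = 1 := by
    rw [← Real.rpow_add hb0, neg_add_cancel, Real.rpow_zero]
  have hle := abs_le.1 hab
  have hBD : 0 ≤ b ^ (-p) * D ^ p := by positivity
  rcases le_or_gt D (1 / 2) with h | h
  · rw [min_eq_right (by linarith)]
    have hBA : b ^ (-p) ≤ 2 ^ p * a ^ (-p) := by
      have h1 : a ^ p ≤ 2 ^ p * b ^ p := by
        rw [← Real.mul_rpow zero_le_two hb0.le]
        exact Real.rpow_le_rpow ha0.le (by linarith) (by linarith)
      calc b ^ (-p) = b ^ (-p) * (a ^ (-p) * a ^ p) := by rw [hAa, mul_one]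
        _ ≤ b ^ (-p) * (a ^ (-p) * (2 ^ p * b ^ p)) := by gcongr
        _ = 2 ^ p * a ^ (-p) * (b ^ (-p) * b ^ p) := by ring
        _ = _ := by rw [hBb, mul_one]
    have hAA : a ^ (-p) ≤ 2 ^ p * a ^ (-p) := le_mul_of_one_le_left hA.le hT
    have key : |a ^ (-p) - b ^ (-p)| ≤ p * (2 ^ p * a ^ (-p)) * D := by
      refine abs_le.2 ⟨?_, ?_⟩
      · have := rpow_neg_sub_le hp ha hb0
        have h2 : p * b ^ (-p) * |a - b| ≤ p * (2 ^ p * a ^ (-p)) * D := by gcongr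
        linarith
      · have := rpow_neg_sub_le hp hb ha0
        rw [abs_sub_comm] at this
        have h2 : p * a ^ (-p) * |a - b| ≤ p * (2 ^ p * a ^ (-p)) * D := by gcongr
        linarith
    refine key.trans ?_
    calc p * (2 ^ p * a ^ (-p)) * D = (p * 2 ^ p) * a ^ (-p) * D := by ring
      _ ≤ _ := by
        gcongr
        · linarith
        · linarith
  · have hmin : 1 / 2 ≤ min 1 D := le_min (by norm_num) h.le
    have hP : a ^ p ≤ 2 ^ p * (b ^ p + D ^ p) := by
      have hbp : 0 ≤ b ^ p := Real.rpow_nonneg hb0.le _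
      have h1 : a ^ p ≤ (2 * max b D) ^ p :=
        Real.rpow_le_rpow ha0.le (by linarith [le_max_left b D, le_max_right b D]) (by linarith)
      rw [Real.mul_rpow zero_le_two (by positivity)] at h1
      refine h1.trans ?_
      gcongr
      rcases max_choice b D with h2 | h2 <;> rw [h2] <;> linarith
    have hBA : b ^ (-p) ≤ 2 ^ p * a ^ (-p) * (1 + b ^ (-p) * D ^ p) := by
      calc b ^ (-p) = b ^ (-p) * (a ^ (-p) * a ^ p) := by rw [hAa, mul_one]
        _ ≤ b ^ (-p) * (a ^ (-p) * (2 ^ p * (b ^ p + D ^ p))) := by gcongr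
        _ = 2 ^ p * a ^ (-p) * (b ^ (-p) * b ^ p + b ^ (-p) * D ^ p) := by ring
        _ = _ := by rw [hBb]
    have h3 : |a ^ (-p) - b ^ (-p)| ≤ a ^ (-p) + b ^ (-p) := abs_le.2 ⟨by linarith, by linarith⟩
    set X := b ^ (-p) * D ^ p
    calc |a ^ (-p) - b ^ (-p)| ≤ a ^ (-p) + 2 ^ p * a ^ (-p) * (1 + X) := by linarith
      _ ≤ a ^ (-p) * (2 * (min 1 D + X)) + 2 ^ p * a ^ (-p) * (2 * (min 1 D + X)) := by
        refine add_le_add (le_mul_of_one_le_right hA.le (by linarith)) ?_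
        gcongr
        linarith
      _ = (0 + 2 + 2 * 2 ^ p) * a ^ (-p) * (min 1 D + X) := by ring
      _ ≤ _ := by
        gcongr
        positivity

lemma fracEta_diff_le (N : ℕ) (hN : 1 ≤ N) (s : ℝ) (hs0 : 0 < s) :
    ∃ C : ℝ, 0 < C ∧ ∀ x y : ES N, |fracEta N s x - fracEta N s y| ≤
      C * fracEta N s x * (min 1 ‖x - y‖ + fracEta N s y * ‖x - y‖ ^ ((N : ℝ) + 2 * s)) := by
  have hN' : (1 : ℝ) ≤ N := by exact_mod_cast hN
  refine ⟨((N : ℝ) + 2 * s) * 2 ^ ((N : ℝ) + 2 * s) + 2 + 2 * 2 ^ ((N : ℝ) + 2 * s), by positivity,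
    fun x y => ?_⟩
  simp only [fracEta_eq]
  refine rpow_neg_diff_le (by linarith) ?_ ?_ (norm_nonneg _) ?_
  · exact Real.one_le_sqrt.2 (by nlinarith [norm_nonneg x])
  · exact Real.one_le_sqrt.2 (by nlinarith [norm_nonneg y])
  · have h1 := bracket_le_add x y
    have h2 := bracket_le_add y x
    rw [norm_sub_rev] at h2
    exact abs_le.2 ⟨by linarith, by linarith⟩

lemma cutoff_diff_le (φ : ℝ → ℝ) (hφ : ContDiff ℝ (⊤ : ℕ∞) φ) (hφc : HasCompactSupport φ) :
    ∃ K : ℝ, 0 < K ∧ ∀ (N : ℕ) (R : ℝ), 1 ≤ R → ∀ x y : ES N,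
      |φ (‖x‖ / R) - φ (‖y‖ / R)| ≤ K * min 1 ‖x - y‖ := by
  obtain ⟨M, hM⟩ := hφc.exists_bound_of_continuous hφ.continuous
  obtain ⟨L, hL⟩ := hφ.lipschitzWith_of_hasCompactSupport hφc (by simp)
  have hM0 : 0 ≤ M := (norm_nonneg _).trans (hM 0)
  refine ⟨2 * M + L + 1, by positivity, fun N R hR x y => ?_⟩
  have hL0 : (0 : ℝ) ≤ L := L.2
  have hR0 : 0 < R := by linarith
  rcases le_total 1 ‖x - y‖ with h | h
  · rw [min_eq_left h]
    have h1 := abs_sub (φ (‖x‖ / R)) (φ (‖y‖ / R))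
    have h2 := hM (‖x‖ / R)
    have h3 := hM (‖y‖ / R)
    rw [Real.norm_eq_abs] at h2 h3
    linarith
  · rw [min_eq_right h]
    have h1 := hL.dist_le_mul (‖x‖ / R) (‖y‖ / R)
    rw [Real.dist_eq, Real.dist_eq, ← sub_div, abs_div, abs_of_pos hR0] at h1
    have h2 : |‖x‖ - ‖y‖| / R ≤ ‖x - y‖ :=
      (div_le_self (abs_nonneg _) hR).trans (abs_norm_sub_norm_le x y)
    have h3 := mul_le_mul_of_nonneg_left h2 hL0
    nlinarith [norm_nonneg (x - y)]

/-- The cross term `I(x)` satisfies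
`|I(x)| ≤ C (1 + R^{-2s}) η(x)` for all `x` and `R ≥ 1`, with `C` independent of
`R` and `x`. -/
theorem cross_term_bound (N : ℕ) (hN : 1 ≤ N) (s : ℝ) (hs0 : 0 < s)
    (hs1 : s < 1) (φ : ℝ → ℝ) (hφ : ContDiff ℝ (⊤ : ℕ∞) φ) (hφc : HasCompactSupport φ)
    (hφ1 : ∀ t : ℝ, |t| ≤ 1 → φ t = 1) (hφ0 : ∀ t : ℝ, 2 < |t| → φ t = 0) :
    ∃ C : ℝ, 0 < C ∧ ∀ R : ℝ, 1 ≤ R → ∀ x : ES N,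
      |∫ y : ES N,
          (fracEta N s x - fracEta N s y) * (φ (‖x‖ / R) - φ (‖y‖ / R)) /
            ‖x - y‖ ^ ((N : ℝ) + 2 * s)|
        ≤ C * (1 + R ^ (-(2 * s))) * fracEta N s x := by
  have hN' : (1 : ℝ) ≤ N := by exact_mod_cast hN
  obtain ⟨C, hC, hη⟩ := fracEta_diff_le N hN s hs0
  obtain ⟨K, hK, hψ⟩ := cutoff_diff_le φ hφ hφc
  have hk := integrable_min_kernel N hN ((N : ℝ) + 2 * s) (by linarith) (by linarith)
  have he : Integrable (fun y : ES N => fracEta N s y) := by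
    have := integrable_rpow_neg_one_add_norm_sq (E := ES N) (μ := volume) (r := (N : ℝ) + 2 * s)
      (by rw [finrank_euclideanSpace_fin]; linarith)
    simpa only [fracEta, neg_div] using this
  have hpos : ∀ z : ES N, 0 < fracEta N s z := fun z =>
    Real.rpow_pos_of_pos (by positivity) _
  set p : ℝ := (N : ℝ) + 2 * s with hp
  set J : ℝ := (∫ z : ES N, min 1 (‖z‖ ^ 2) / ‖z‖ ^ p) + ∫ y : ES N, fracEta N s y with hJ
  have hJ0 : 0 ≤ J := add_nonneg (integral_nonneg fun z => by positivity)
    (integral_nonneg fun z => (hpos z).le)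
  refine ⟨C * K * (J + 1), by positivity, fun R hR x => ?_⟩
  have hx := hpos x
  have hkx : Integrable (fun y : ES N => min 1 (‖x - y‖ ^ 2) / ‖x - y‖ ^ p) :=
    hk.comp_sub_left x
  have hint : ∫ y : ES N, C * K * fracEta N s x *
      (min 1 (‖x - y‖ ^ 2) / ‖x - y‖ ^ p + fracEta N s y) = C * K * fracEta N s x * J := by
    rw [integral_const_mul, integral_add hkx he, hJ,
      integral_sub_left_eq_self (fun z : ES N => min 1 (‖z‖ ^ 2) / ‖z‖ ^ p) volume x]
  have hbound : ∀ y : ES N,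
      ‖(fracEta N s x - fracEta N s y) * (φ (‖x‖ / R) - φ (‖y‖ / R)) / ‖x - y‖ ^ p‖ ≤
        C * K * fracEta N s x * (min 1 (‖x - y‖ ^ 2) / ‖x - y‖ ^ p + fracEta N s y) := by
    intro y
    have hy := hpos y
    rcases (norm_nonneg (x - y)).eq_or_lt with h0 | h0
    · rw [← h0, Real.zero_rpow (by linarith), div_zero, div_zero, norm_zero]
      positivity
    · have hD : 0 < ‖x - y‖ ^ p := Real.rpow_pos_of_pos h0 _
      have hsq : min 1 (‖x - y‖ ^ 2) = min 1 ‖x - y‖ * min 1 ‖x - y‖ := by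
        rcases le_total 1 ‖x - y‖ with h | h
        · rw [min_eq_left h, min_eq_left (by nlinarith), one_mul]
        · rw [min_eq_right h, min_eq_right (by nlinarith), sq]
      rw [Real.norm_eq_abs, abs_div, abs_mul, abs_of_pos hD, div_le_iff₀ hD, hsq]
      set m := min 1 ‖x - y‖
      have hm0 : 0 ≤ m := le_min zero_le_one h0.le
      have hm1 : m ≤ 1 := min_le_left _ _
      calc |fracEta N s x - fracEta N s y| * |φ (‖x‖ / R) - φ (‖y‖ / R)|
          ≤ (C * fracEta N s x * (m + fracEta N s y * ‖x - y‖ ^ p)) * (K * m) :=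
            mul_le_mul (hη x y) (hψ N R hR x y) (abs_nonneg _) (by positivity)
        _ = C * K * fracEta N s x * (m * m + fracEta N s y * ‖x - y‖ ^ p * m) := by ring
        _ ≤ C * K * fracEta N s x * (m * m + fracEta N s y * ‖x - y‖ ^ p * 1) := by gcongr
        _ = _ := by field_simp
  have hmain := norm_integral_le_of_norm_le
    ((hkx.add he).const_mul (C * K * fracEta N s x)) (Eventually.of_forall hbound)
  have hmain' := hmain.trans_eq hint
  rw [Real.norm_eq_abs] at hmain'
  refine hmain'.trans ?_
  have hR0 : 0 ≤ R ^ (-(2 * s)) := Real.rpow_nonneg (by linarith) _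
  calc C * K * fracEta N s x * J ≤ C * K * fracEta N s x * ((J + 1) * (1 + R ^ (-(2 * s)))) := by
        gcongr
        nlinarith
    _ = _ := by ring
end
end

section
/- Let N ≥ 1, 0 < s < 1, and let u ∈ C^{2σ}(ℝ^N) ∩ L_s(ℝ^N) for some σ > s satisfy (-Δ)^s u(x) = e^{u(x)} for all x ∈ ℝ^N. Then with η(x) = (1+|x|²)^{-(N+2s)/2}, the function e^u η is integrable on ℝ^N and ∫_{ℝ^N} e^{u(x)} η(x) dx = ∫_{ℝ^N} u(x) (-Δ)^s η(x) dx. -/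
/-! The operator `(-Δ)^s` is replaced by its truncation `T_ε`, which integrates only over
`|x - ξ| > ε`. The truncated kernel is integrable and even, and `η` convolved with it is bounded
by a multiple of `η`; hence Fubini gives `∫ η T_ε u = ∫ u T_ε η` with both integrands integrable
(`truncLap_symm`).

It remains to let `ε → 0` on both sides by dominated convergence (`tendsto_integral_truncLap`).
The difference `T_ε w - T_r w`, once symmetrized in `z ↦ -z`, is an integral of second differences
of `w` over `ε < |z| ≤ r`. If these are at most `M(x) |z|^γ` with `γ > 2s`, then
`|T_ε w| ≤ |T_r w| + C M` uniformly in `ε ≤ r` (`abs_truncLap_le`). For `u` this holds with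
`γ = 2σ` and `M` constant, by Hölder regularity (`MemCHolder.second_diff`); for `η` it holds with
`γ = 2` and `M` a multiple of `η` (`fracEta_second_diff`). The dominating functions are integrable
because `η` is, and because `u η` is by `u ∈ L_s`. The limit on the left also yields the
integrability of `e^u η`. -/


open MeasureTheory Filter Set

noncomputable section

/-! ### The truncated kernel and operator -/

/-- The truncated kernel `1_{ε < |z|} |z|^{-q}`. -/
def truncKer (N : ℕ) (q ε : ℝ) (z : ES N) : ℝ :=
  {z : ES N | ε < ‖z‖}.indicator (fun z => ‖z‖ ^ (-q)) z

/-- The weight `(1 + |x|)^{-q}`. -/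
def wt (N : ℕ) (q : ℝ) (x : ES N) : ℝ := (1 + ‖x‖) ^ (-q)

/-- The truncated, unnormalized fractional Laplacian
`∫_{ε < |x - ξ|} (w x - w ξ) |x - ξ|^{-q} dξ`. -/
def truncLap (N : ℕ) (q ε : ℝ) (w : ES N → ℝ) (x : ES N) : ℝ :=
  ∫ ξ, (w x - w ξ) * truncKer N q ε (x - ξ)

section kernel

variable {N : ℕ} {q ε : ℝ}

lemma setIntegral_eq_truncLap (w : ES N → ℝ) (x : ES N) :
    ∫ ξ in {ξ : ES N | ε < ‖x - ξ‖}, (w x - w ξ) / ‖x - ξ‖ ^ q = truncLap N q ε w x := by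
  rw [truncLap, ← integral_indicator (measurableSet_lt measurable_const (by fun_prop))]
  congr 1
  ext ξ
  simp only [truncKer, indicator_apply, mem_ofPred_eq]
  split_ifs
  · rw [Real.rpow_neg (norm_nonneg _), div_eq_mul_inv]
  · simp

lemma truncKer_nonneg (z : ES N) : 0 ≤ truncKer N q ε z :=
  indicator_nonneg (fun _ _ => by positivity) z

lemma truncKer_neg (z : ES N) : truncKer N q ε (-z) = truncKer N q ε z := by
  simp [truncKer, indicator_apply]

lemma truncKer_sub_comm (x y : ES N) : truncKer N q ε (x - y) = truncKer N q ε (y - x) := by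
  rw [← truncKer_neg, neg_sub]

lemma measurable_truncKer : Measurable (truncKer N q ε) := by
  refine Measurable.indicator ?_ (measurableSet_lt measurable_const measurable_norm)
  fun_prop

lemma wt_pos (x : ES N) : 0 < wt N q x := by unfold wt; positivity

lemma wt_le_one (hq : 0 ≤ q) (x : ES N) : wt N q x ≤ 1 :=
  Real.rpow_le_one_of_one_le_of_nonpos (by linarith [norm_nonneg x]) (by linarith)

lemma measurable_wt : Measurable (wt N q) := by unfold wt; fun_prop

lemma integrable_wt (hq : (N : ℝ) < q) : Integrable (wt N q) := by
  apply integrable_one_add_norm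
  simpa using hq

/-- If `a ≤ c b` then `b^{-q} ≤ c^q a^{-q}`. -/
lemma rpow_neg_le_of_le_mul (hq : 0 ≤ q) {a b c : ℝ} (ha : 0 < a) (hb : 0 < b) (hc : 0 < c)
    (h : a ≤ c * b) : b ^ (-q) ≤ c ^ q * a ^ (-q) := by
  have h1 : (c * b) ^ (-q) ≤ a ^ (-q) := Real.rpow_le_rpow_of_nonpos ha h (by linarith)
  rw [Real.mul_rpow hc.le hb.le, Real.rpow_neg hc.le] at h1
  have : 0 < c ^ q := by positivity
  rwa [inv_mul_le_iff₀ this] at h1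

lemma truncKer_le_wt (hq : 0 ≤ q) (hε : 0 < ε) (x ξ : ES N) :
    truncKer N q ε (x - ξ) ≤ ((1 + ‖x‖) / ε + 1) ^ q * wt N q ξ := by
  have hw := (wt_pos (q := q) ξ).le
  rw [truncKer, indicator_apply]
  split_ifs with h
  · simp only [mem_ofPred_eq] at h
    refine rpow_neg_le_of_le_mul hq (by positivity) (hε.trans h) (by positivity) ?_
    have h1 : ‖ξ‖ ≤ ‖x‖ + ‖x - ξ‖ := by
      have := norm_sub_le x (x - ξ); simpa using this
    have h2 : 1 + ‖x‖ ≤ (1 + ‖x‖) / ε * ‖x - ξ‖ := by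
      rw [div_mul_eq_mul_div, le_div_iff₀ hε]
      have := norm_nonneg x
      gcongr
    linarith
  · positivity

lemma integrable_truncKer (hq : (N : ℝ) < q) (hε : 0 < ε) : Integrable (truncKer N q ε) := by
  have hq0 : 0 ≤ q := (Nat.cast_nonneg N).trans hq.le
  refine ((integrable_wt hq).const_mul (((1 + ‖(0 : ES N)‖) / ε + 1) ^ q)).mono'
    measurable_truncKer.aestronglyMeasurable (Eventually.of_forall fun z => ?_)
  rw [Real.norm_of_nonneg (truncKer_nonneg z), ← truncKer_neg, ← zero_sub]
  exact truncKer_le_wt hq0 hε 0 z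

/-- Since `1 + |ξ| ≤ (1 + |x|) + |x - ξ|`, one of the two summands is at least half of the left
side. -/
lemma wt_mul_truncKer_le (hq : 0 ≤ q) (hε : 0 < ε) (x ξ : ES N) :
    wt N q x * truncKer N q ε (x - ξ) ≤
      2 ^ q * wt N q ξ * (wt N q x + truncKer N q ε (x - ξ)) := by
  have hx := (wt_pos (q := q) x).le
  have hξ := (wt_pos (q := q) ξ).le
  have hk := truncKer_nonneg (q := q) (ε := ε) (x - ξ)
  have h1 : ‖ξ‖ ≤ ‖x‖ + ‖x - ξ‖ := by
    have := norm_sub_le x (x - ξ); simpa using this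
  have h2 : (0 : ℝ) ≤ 2 ^ q := by positivity
  rcases le_total (1 + ‖ξ‖) (2 * (1 + ‖x‖)) with h | h
  · have : wt N q x ≤ 2 ^ q * wt N q ξ :=
      rpow_neg_le_of_le_mul hq (by positivity) (by positivity) (by positivity) h
    have h3 := mul_le_mul_of_nonneg_right this hk
    have h4 : 0 ≤ 2 ^ q * wt N q ξ * wt N q x := by positivity
    linarith
  · have : truncKer N q ε (x - ξ) ≤ 2 ^ q * wt N q ξ := by
      rw [truncKer, indicator_apply]
      split_ifs with h'
      · exact rpow_neg_le_of_le_mul hq (by positivity) (hε.trans h') (by positivity) (by linarith)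
      · positivity
    have h3 := mul_le_mul_of_nonneg_left this hx
    have h4 : 0 ≤ 2 ^ q * wt N q ξ * truncKer N q ε (x - ξ) := by positivity
    linarith

lemma integrable_mul_truncKer (hq : 0 ≤ q) (hε : 0 < ε) {w : ES N → ℝ}
    (hwm : AEStronglyMeasurable w) (hw : Integrable fun x => w x * wt N q x) (x : ES N) :
    Integrable fun ξ => w ξ * truncKer N q ε (x - ξ) := by
  refine (hw.norm.const_mul (((1 + ‖x‖) / ε + 1) ^ q)).mono'
    (hwm.mul (measurable_truncKer.comp (measurable_const.sub measurable_id)).aestronglyMeasurable)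
    (Eventually.of_forall fun ξ => ?_)
  rw [norm_mul, norm_mul, Real.norm_of_nonneg (truncKer_nonneg _),
    Real.norm_of_nonneg (wt_pos ξ).le]
  have := mul_le_mul_of_nonneg_left (truncKer_le_wt hq hε x ξ) (norm_nonneg (w ξ))
  linarith

lemma truncLap_eq (hq : (N : ℝ) < q) (hε : 0 < ε) {w : ES N → ℝ}
    (hwm : AEStronglyMeasurable w) (hw : Integrable fun x => w x * wt N q x) (x : ES N) :
    truncLap N q ε w x =
      w x * (∫ z, truncKer N q ε z) - ∫ ξ, w ξ * truncKer N q ε (x - ξ) := by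
  have hq0 : 0 ≤ q := (Nat.cast_nonneg N).trans hq.le
  simp only [truncLap, sub_mul]
  rw [integral_sub (((integrable_truncKer hq hε).comp_sub_left x).const_mul _)
    (integrable_mul_truncKer hq0 hε hwm hw x), integral_const_mul,
    integral_sub_left_eq_self (truncKer N q ε) volume x]

/-! ### Symmetry of the truncated operator -/

lemma integrable_kernel_prod (hq : (N : ℝ) < q) (hε : 0 < ε) {v w : ES N → ℝ} {C : ℝ}
    (hvm : AEStronglyMeasurable v) (hv : ∀ x, |v x| ≤ C * wt N q x)
    (hwm : AEStronglyMeasurable w) (hw : Integrable fun x => w x * wt N q x) :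
    Integrable (fun p : ES N × ES N => v p.1 * w p.2 * truncKer N q ε (p.1 - p.2))
      (volume.prod volume) := by
  have hq0 : 0 ≤ q := (Nat.cast_nonneg N).trans hq.le
  have h1 := (integrable_wt hq).mul_prod hw.norm
  have h2 := hw.norm.convolution_integrand (ContinuousLinearMap.mul ℝ ℝ)
    (integrable_truncKer hq hε)
  refine ((h1.add h2).const_mul (C * 2 ^ q)).mono' ?_ (Eventually.of_forall fun p => ?_)
  · exact (hvm.comp_fst.mul hwm.comp_snd).mul
      (measurable_truncKer.comp (measurable_fst.sub measurable_snd)).aestronglyMeasurable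
  · simp only [Pi.add_apply, ContinuousLinearMap.mul_apply', norm_mul,
      Real.norm_of_nonneg (truncKer_nonneg _), Real.norm_of_nonneg (wt_pos _).le]
    have hk := truncKer_nonneg (q := q) (ε := ε) (p.1 - p.2)
    have hC : 0 ≤ C := by
      have := (abs_nonneg _).trans (hv 0)
      exact nonneg_of_mul_nonneg_left this (wt_pos 0)
    have hW := norm_nonneg (w p.2)
    calc ‖v p.1‖ * ‖w p.2‖ * truncKer N q ε (p.1 - p.2)
        ≤ (C * wt N q p.1) * ‖w p.2‖ * truncKer N q ε (p.1 - p.2) := by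
          gcongr; exact hv _
      _ = C * ‖w p.2‖ * (wt N q p.1 * truncKer N q ε (p.1 - p.2)) := by ring
      _ ≤ C * ‖w p.2‖ * (2 ^ q * wt N q p.2 * (wt N q p.1 + truncKer N q ε (p.1 - p.2))) := by
          exact mul_le_mul_of_nonneg_left (wt_mul_truncKer_le hq0 hε _ _) (by positivity)
      _ = _ := by ring

lemma integrable_mul_of_bound {v w : ES N → ℝ} {C : ℝ}
    (hvm : AEStronglyMeasurable v) (hv : ∀ x, |v x| ≤ C * wt N q x)
    (hwm : AEStronglyMeasurable w) (hw : Integrable fun x => w x * wt N q x) :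
    Integrable fun x => v x * w x := by
  refine (hw.norm.const_mul C).mono' (hvm.mul hwm) (Eventually.of_forall fun x => ?_)
  rw [norm_mul, norm_mul, Real.norm_of_nonneg (wt_pos x).le]
  have := mul_le_mul_of_nonneg_right (hv x) (norm_nonneg (w x))
  simp only [Real.norm_eq_abs] at *
  linarith

/-- The truncated operator is symmetric: `∫ v (T_ε w) = ∫ w (T_ε v)`, by Fubini, with both
integrands integrable. -/
lemma truncLap_symm (hq : (N : ℝ) < q) (hε : 0 < ε) {v w : ES N → ℝ} {C : ℝ}
    (hvm : AEStronglyMeasurable v) (hv : ∀ x, |v x| ≤ C * wt N q x)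
    (hwm : AEStronglyMeasurable w) (hw : Integrable fun x => w x * wt N q x)
    (hv' : Integrable fun x => v x * wt N q x) :
    Integrable (fun x => v x * truncLap N q ε w x) ∧
    Integrable (fun x => w x * truncLap N q ε v x) ∧
    ∫ x, v x * truncLap N q ε w x = ∫ x, w x * truncLap N q ε v x := by
  have hG := integrable_kernel_prod hq hε hvm hv hwm hw
  set A := ∫ z, truncKer N q ε z with hA
  have hvw := integrable_mul_of_bound hvm hv hwm hw
  have e1 : (fun x => v x * truncLap N q ε w x) = fun x => A * (v x * w x) -
      ∫ y, v x * w y * truncKer N q ε (x - y) := by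
    ext x
    rw [truncLap_eq hq hε hwm hw, mul_sub, ← hA]
    congr 1
    · ring
    · simp only [mul_assoc, integral_const_mul]
  have e2 : (fun y => w y * truncLap N q ε v y) = fun y => A * (v y * w y) -
      ∫ x, v x * w y * truncKer N q ε (x - y) := by
    ext y
    rw [truncLap_eq hq hε hvm hv', mul_sub, ← hA]
    congr 1
    · ring
    · rw [← integral_const_mul]
      congr 1
      ext x
      rw [truncKer_sub_comm]
      ring
  have i1 : Integrable fun x => ∫ y, v x * w y * truncKer N q ε (x - y) := hG.integral_prod_left
  have i2 : Integrable fun y => ∫ x, v x * w y * truncKer N q ε (x - y) := hG.integral_prod_right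
  rw [e1, e2]
  refine ⟨(hvw.const_mul A).sub i1, (hvw.const_mul A).sub i2, ?_⟩
  rw [integral_sub (hvw.const_mul A) i1, integral_sub (hvw.const_mul A) i2]
  congr 1
  exact integral_integral_swap hG

/-! ### Removing the truncation -/

lemma integrableOn_rpow_closedBall (hN : 1 ≤ N) {a r : ℝ} (ha : -(N : ℝ) < a) :
    Integrable ((Metric.closedBall (0 : ES N) r).indicator fun z => ‖z‖ ^ a) := by
  rw [integrable_indicator_iff Metric.isClosed_closedBall.measurableSet]
  refine (integrableOn_ball_of_norm_le_rpow (C := 1) (α := -a) (r := r + 1) (by simpa using hN)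
    (by simp; linarith) (Eventually.of_forall fun z => ?_)
    (by fun_prop : Measurable fun z : ES N => ‖z‖ ^ a).aestronglyMeasurable).mono_set
    (Metric.closedBall_subset_ball (by linarith))
  rw [Real.norm_of_nonneg (by positivity)]; simp

lemma truncLap_eq_sub (w : ES N → ℝ) (x : ES N) :
    truncLap N q ε w x = ∫ z, (w x - w (x - z)) * truncKer N q ε z := by
  rw [truncLap, ← integral_sub_left_eq_self (fun z => (w x - w (x - z)) * truncKer N q ε z)
    volume x]
  simp

/-- Symmetrizing `z ↦ -z` replaces first differences by second differences, whose size near the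
origin makes the truncated operators bounded uniformly in the truncation. -/
lemma abs_truncLap_le (hN : 1 ≤ N) (hq : (N : ℝ) < q) {r γ M : ℝ} (hε : 0 < ε) (hεr : ε ≤ r)
    (hγ : q - N < γ) {w : ES N → ℝ} (hwm : AEStronglyMeasurable w)
    (hw : Integrable fun x => w x * wt N q x) (x : ES N)
    (hM : ∀ h : ES N, ‖h‖ ≤ r → |w (x + h) + w (x - h) - 2 * w x| ≤ M * ‖h‖ ^ γ) :
    |truncLap N q ε w x| ≤ |truncLap N q r w x| +
      M * ∫ z, (Metric.closedBall (0 : ES N) r).indicator (fun z => ‖z‖ ^ (γ - q)) z := by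
  have hq0 : 0 ≤ q := (Nat.cast_nonneg N).trans hq.le
  have hint : ∀ δ, 0 < δ → Integrable fun z => (w x - w (x - z)) * truncKer N q δ z := by
    intro δ hδ
    have h1 := ((integrable_truncKer hq hδ).const_mul (w x)).sub
      ((integrable_mul_truncKer hq0 hδ hwm hw x).comp_sub_left x)
    refine h1.congr (Eventually.of_forall fun z => ?_)
    simp [sub_mul]
  set D : ES N → ℝ := fun z => (w x - w (x - z)) * (truncKer N q ε z - truncKer N q r z) with hD
  have hDint : Integrable D :=
    ((hint ε hε).sub (hint r (hε.trans_le hεr))).congr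
      (Eventually.of_forall fun z => by simp [hD, mul_sub])
  have e1 : truncLap N q ε w x - truncLap N q r w x = ∫ z, D z := by
    rw [truncLap_eq_sub, truncLap_eq_sub, ← integral_sub (hint ε hε) (hint r (hε.trans_le hεr))]
    simp [hD, mul_sub]
  have e2 : 2 * ∫ z, D z = ∫ z, (D z + D (-z)) := by
    rw [integral_add hDint hDint.comp_neg, integral_neg_eq_self D volume, two_mul]
  have hb : ∀ z, ‖D z + D (-z)‖ ≤
      M * (Metric.closedBall (0 : ES N) r).indicator (fun z => ‖z‖ ^ (γ - q)) z := by
    intro z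
    have e3 : D z + D (-z) = -(w (x + z) + w (x - z) - 2 * w x) *
        (truncKer N q ε z - truncKer N q r z) := by
      simp only [hD, truncKer_neg, sub_neg_eq_add]; ring
    rw [e3]
    by_cases h1 : ‖z‖ ≤ r
    · have h2 : truncKer N q r z = 0 := by simp [truncKer, h1]
      rw [indicator_of_mem (by simpa using h1), h2, sub_zero, norm_mul, norm_neg,
        Real.norm_of_nonneg (truncKer_nonneg z), Real.norm_eq_abs]
      have hM0 := hM z h1
      by_cases h3 : ε < ‖z‖
      · have h4 : truncKer N q ε z = ‖z‖ ^ (-q) := by simp [truncKer, h3]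
        have hz : 0 < ‖z‖ := hε.trans h3
        rw [h4, sub_eq_add_neg γ q, Real.rpow_add hz, ← mul_assoc]
        gcongr
      · have h4 : truncKer N q ε z = 0 := by simp [truncKer, h3]
        rw [h4, mul_zero]
        rcases eq_or_ne z 0 with rfl | hz
        · have : (0 : ℝ) ≤ M := by
            -- any vector of norm exactly `r` certifies `0 ≤ M`
            have : Nontrivial (ES N) := Module.nontrivial_of_finrank_pos (R := ℝ) (by simp; omega)
            obtain ⟨h, hh⟩ := exists_norm_eq (ES N) (hε.trans_le hεr).le
            have h5 := (abs_nonneg _).trans (hM h hh.le)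
            rw [hh] at h5
            exact nonneg_of_mul_nonneg_left h5 (Real.rpow_pos_of_pos (hε.trans_le hεr) _)
          positivity
        · have hz : 0 < ‖z‖ := norm_pos_iff.2 hz
          have : 0 ≤ M := nonneg_of_mul_nonneg_left ((abs_nonneg _).trans hM0)
            (Real.rpow_pos_of_pos hz _)
          positivity
    · have h1' := not_le.1 h1
      have h2 : truncKer N q ε z = truncKer N q r z := by
        simp [truncKer, h1', hεr.trans_lt h1']
      rw [indicator_of_notMem (by simpa using h1'), h2]
      simp
  have hbint := (integrableOn_rpow_closedBall hN (a := γ - q) (r := r) (by linarith)).const_mul M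
  have h6 := norm_integral_le_of_norm_le hbint (Eventually.of_forall hb)
  rw [integral_const_mul, ← e2, ← e1, Real.norm_eq_abs, abs_mul, abs_two] at h6
  have h7 := abs_add_le (truncLap N q ε w x - truncLap N q r w x) (truncLap N q r w x)
  rw [sub_add_cancel] at h7
  have h8 := abs_nonneg (truncLap N q ε w x - truncLap N q r w x)
  linarith

/-- Dominated convergence as the truncation is removed. -/
lemma tendsto_integral_truncLap (hN : 1 ≤ N) (hq : (N : ℝ) < q) {r γ c : ℝ} (hr : 0 < r)
    (hγ : q - N < γ) {g w M L : ES N → ℝ} (hwm : AEStronglyMeasurable w)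
    (hw : Integrable fun x => w x * wt N q x)
    (hM : ∀ x h : ES N, ‖h‖ ≤ r → |w (x + h) + w (x - h) - 2 * w x| ≤ M x * ‖h‖ ^ γ)
    (hg : ∀ δ, 0 < δ → Integrable fun x => g x * truncLap N q δ w x)
    (hgM : Integrable fun x => g x * M x)
    (hL : ∀ x, Tendsto (fun δ => c * truncLap N q δ w x) (nhdsWithin 0 (Ioi 0)) (nhds (L x))) :
    Integrable (fun x => g x * L x) ∧
    Tendsto (fun δ => ∫ x, g x * (c * truncLap N q δ w x)) (nhdsWithin 0 (Ioi 0))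
      (nhds (∫ x, g x * L x)) := by
  set K := ∫ z, (Metric.closedBall (0 : ES N) r).indicator (fun z => ‖z‖ ^ (γ - q)) z
  set b : ES N → ℝ := fun x => |c| * (‖g x * truncLap N q r w x‖ + K * ‖g x * M x‖) with hb
  have hbi : Integrable b := ((hg r hr).norm.add (hgM.norm.const_mul K)).const_mul _
  have hK : 0 ≤ K := integral_nonneg fun z => indicator_nonneg (fun _ _ => by positivity) z
  have hmeas : ∀ᶠ δ in nhdsWithin (0 : ℝ) (Ioi 0),
      AEStronglyMeasurable (fun x => g x * (c * truncLap N q δ w x)) := by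
    filter_upwards [self_mem_nhdsWithin] with δ hδ
    refine ((hg δ hδ).const_mul c).aestronglyMeasurable.congr (Eventually.of_forall fun x => ?_)
    simp only; ring
  have hbd : ∀ᶠ δ in nhdsWithin (0 : ℝ) (Ioi 0), ∀ x, ‖g x * (c * truncLap N q δ w x)‖ ≤ b x := by
    filter_upwards [self_mem_nhdsWithin, Ioc_mem_nhdsGT hr] with δ hδ hδr x
    have h1 := abs_truncLap_le hN hq hδ hδr.2 hγ hwm hw x (hM x)
    have h2 : M x * K ≤ ‖M x‖ * K := by gcongr; exact Real.le_norm_self _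
    simp only [hb, norm_mul, Real.norm_eq_abs] at h2 ⊢
    calc |g x| * (|c| * |truncLap N q δ w x|)
        ≤ |g x| * (|c| * (|truncLap N q r w x| + |M x| * K)) := by gcongr; linarith
      _ = _ := by ring
  have hlim : ∀ x, Tendsto (fun δ => g x * (c * truncLap N q δ w x)) (nhdsWithin 0 (Ioi 0))
      (nhds (g x * L x)) := fun x => (hL x).const_mul _
  have hT := tendsto_integral_filter_of_dominated_convergence b hmeas
    (hbd.mono fun δ h => Eventually.of_forall h) hbi (Eventually.of_forall hlim)
  refine ⟨hbi.mono' ?_ (Eventually.of_forall fun x => ?_), hT⟩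
  · -- along a sequence tending to `0`, the limit inherits measurability
    obtain ⟨δ, hδ⟩ := exists_seq_tendsto (nhdsWithin (0 : ℝ) (Ioi 0))
    obtain ⟨n, hn⟩ := eventually_atTop.1 (hδ.eventually hmeas)
    exact aestronglyMeasurable_of_tendsto_ae atTop (f := fun k x =>
      g x * (c * truncLap N q (δ (k + n)) w x)) (fun k => hn _ (by omega))
      (Eventually.of_forall fun x => (hlim x).comp (hδ.comp (tendsto_add_atTop_nat n)))
  · exact le_of_tendsto (hlim x).norm (hbd.mono fun δ h => h x)

end kernel

/-! ### The weight `η` -/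

lemma fracEta_nonneg (N : ℕ) (s : ℝ) (x : ES N) : 0 ≤ fracEta N s x := by
  unfold fracEta; positivity

lemma continuous_fracEta (N : ℕ) (s : ℝ) : Continuous (fracEta N s) := by
  unfold fracEta
  exact Continuous.rpow_const (by fun_prop) fun x => Or.inl (by positivity)

lemma fracEta_le (N : ℕ) {s : ℝ} (hs : 0 ≤ s) (x : ES N) :
    fracEta N s x ≤ 2 ^ (((N : ℝ) + 2 * s) / 2) * wt N ((N : ℝ) + 2 * s) x := by
  have h : wt N ((N : ℝ) + 2 * s) x = ((1 + ‖x‖) ^ 2) ^ (-(((N : ℝ) + 2 * s) / 2)) := by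
    rw [wt, ← Real.rpow_natCast, ← Real.rpow_mul (by positivity)]
    congr 1; push_cast; ring
  rw [h, fracEta]
  refine rpow_neg_le_of_le_mul (by positivity) (by positivity) (by positivity) (by norm_num) ?_
  nlinarith [sq_nonneg (1 - ‖x‖)]

/-- First-order Taylor bound for `(1 + t)^{-p} = exp (-p log (1 + t))` near `t = 0`. -/
lemma abs_one_add_rpow_sub_le {p t : ℝ} (hp : 0 < p) (ht : |t| ≤ 1 / 2) (htp : p * |t| ≤ 1 / 2) :
    |(1 + t) ^ (-p) - 1 + p * t| ≤ (4 * p ^ 2 + 2 * p) * t ^ 2 := by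
  have ht' := abs_le.1 ht
  have h1 : |Real.log (1 + t) - t| ≤ 2 * t ^ 2 := by
    have := Real.abs_log_sub_add_sum_range_le (x := -t) (by rw [abs_neg]; linarith) 1
    simp only [Finset.sum_range_one, abs_neg, sub_neg_eq_add] at this
    norm_num at this
    rw [neg_add_eq_sub] at this
    refine this.trans ?_
    rw [div_le_iff₀ (by linarith)]
    nlinarith [sq_nonneg t]
  have h2 : |Real.log (1 + t)| ≤ 2 * |t| := by
    have h3 := abs_add_le (Real.log (1 + t) - t) t
    rw [sub_add_cancel] at h3
    have : t ^ 2 = |t| * |t| := by rw [← sq, sq_abs]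
    nlinarith [abs_nonneg t]
  rw [Real.rpow_def_of_pos (by linarith)]
  set l := Real.log (1 + t)
  have h4 : |l * -p| ≤ 2 * p * |t| := by
    rw [abs_mul, abs_neg, abs_of_pos hp]; nlinarith
  have h5 := Real.abs_exp_sub_one_sub_id_le (x := l * -p) (h4.trans (by linarith))
  have h6 : (l * -p) ^ 2 ≤ 4 * p ^ 2 * t ^ 2 := by
    rw [← sq_abs (l * -p), ← sq_abs t]
    calc |l * -p| ^ 2 ≤ (2 * p * |t|) ^ 2 := by gcongr
      _ = _ := by ring
  have h7 : Real.exp (l * -p) - 1 + p * t =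
      (Real.exp (l * -p) - 1 - l * -p) + -(p * (l - t)) := by ring
  rw [h7]
  refine (abs_add_le _ _).trans ?_
  rw [abs_neg, abs_mul, abs_of_pos hp]
  nlinarith

/-- Second differences of `η` are bounded by `η` itself: after dividing by `η x`, one compares
`(1 + β ± τ)^{-p}` with its first-order expansion, where `β = |h|²/(1+|x|²)` and
`τ = 2⟨x,h⟩/(1+|x|²)`; the terms linear in `τ` cancel. -/
lemma fracEta_second_diff (N : ℕ) {s : ℝ} (hs : 0 < s) :
    ∃ r C : ℝ, 0 < r ∧ ∀ x h : ES N, ‖h‖ ≤ r →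
      |fracEta N s (x + h) + fracEta N s (x - h) - 2 * fracEta N s x| ≤
        C * fracEta N s x * ‖h‖ ^ (2 : ℝ) := by
  set p := ((N : ℝ) + 2 * s) / 2 with hp_def
  have hp : 0 < p := by positivity
  refine ⟨1 / (4 * (1 + p)), 2 * p + 8 * (4 * p ^ 2 + 2 * p), by positivity, fun x h hh => ?_⟩
  have hh1 : ‖h‖ * (4 * (1 + p)) ≤ 1 := by rwa [le_div_iff₀ (by positivity)] at hh
  have hh0 := norm_nonneg h
  have hph : 0 ≤ p * ‖h‖ := by positivity
  have hh4 : ‖h‖ ≤ 1 / 4 := by nlinarith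
  set a := 1 + ‖x‖ ^ 2 with ha
  have ha1 : 1 ≤ a := by nlinarith [sq_nonneg ‖x‖]
  have ha0 : 0 < a := by linarith
  set β := ‖h‖ ^ 2 / a with hβ
  set τ := 2 * inner ℝ x h / a with hτ
  have hβ0 : 0 ≤ β := by positivity
  have hβ1 : β ≤ ‖h‖ ^ 2 := div_le_self (by positivity) ha1
  have hτ1 : |τ| ≤ ‖h‖ := by
    rw [hτ, abs_div, abs_of_pos ha0, div_le_iff₀ ha0, abs_mul, abs_two]
    have := abs_real_inner_le_norm x h
    nlinarith [mul_nonneg hh0 (sq_nonneg (1 - ‖x‖))]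
  have key : ∀ t : ℝ, |t| ≤ 2 * ‖h‖ → |(1 + t) ^ (-p) - 1 + p * t| ≤
      (4 * p ^ 2 + 2 * p) * (4 * ‖h‖ ^ 2) := by
    intro t ht
    refine (abs_one_add_rpow_sub_le hp (by linarith) (by nlinarith)).trans ?_
    have : t ^ 2 ≤ 4 * ‖h‖ ^ 2 := by
      rw [← sq_abs t]
      calc |t| ^ 2 ≤ (2 * ‖h‖) ^ 2 := by gcongr
        _ = _ := by ring
    gcongr
  have hτ2 := abs_le.1 hτ1
  have b1 : |β + τ| ≤ 2 * ‖h‖ := by rw [abs_le]; constructor <;> nlinarith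
  have b2 : |β - τ| ≤ 2 * ‖h‖ := by rw [abs_le]; constructor <;> nlinarith
  have pos1 : 0 ≤ 1 + (β + τ) := by linarith [(abs_le.1 b1).1]
  have pos2 : 0 ≤ 1 + (β - τ) := by linarith [(abs_le.1 b2).1]
  have f1 : fracEta N s (x + h) = a ^ (-p) * (1 + (β + τ)) ^ (-p) := by
    rw [← Real.mul_rpow ha0.le pos1, fracEta, ← hp_def]
    congr 1
    rw [norm_add_sq_real, hβ, hτ]; field_simp; rw [ha]; ring
  have f2 : fracEta N s (x - h) = a ^ (-p) * (1 + (β - τ)) ^ (-p) := by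
    rw [← Real.mul_rpow ha0.le pos2, fracEta, ← hp_def]
    congr 1
    rw [norm_sub_sq_real, hβ, hτ]; field_simp; rw [ha]; ring
  have f3 : fracEta N s x = a ^ (-p) := rfl
  have hap : 0 ≤ a ^ (-p) := by positivity
  rw [f1, f2, f3, Real.rpow_two]
  have k1 := abs_le.1 (key _ b1)
  have k2 := abs_le.1 (key _ b2)
  have e : a ^ (-p) * (1 + (β + τ)) ^ (-p) + a ^ (-p) * (1 + (β - τ)) ^ (-p) - 2 * a ^ (-p) =
      a ^ (-p) * ((1 + (β + τ)) ^ (-p) + (1 + (β - τ)) ^ (-p) - 2) := by ring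
  rw [e, abs_mul, abs_of_nonneg hap, mul_comm _ (a ^ (-p)), mul_assoc]
  refine mul_le_mul_of_nonneg_left ?_ hap
  have hpβ : p * β ≤ p * ‖h‖ ^ 2 := by gcongr
  have hpβ0 : 0 ≤ p * β := by positivity
  rw [abs_le]
  constructor <;> linarith

/-! ### Second differences of Hölder functions -/

lemma MemCHolder.continuous {N : ℕ} {β : ℝ} (hβ : 0 < β) {u : ES N → ℝ} (hu : MemCHolder β u) :
    Continuous u := by
  rcases le_or_gt β 1 with h | h
  · obtain ⟨C, hC⟩ := hu.1 h
    exact hC.continuous (by simpa using hβ)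
  · exact (hu.2 h).1.continuous

lemma MemCHolder.second_diff {N : ℕ} {β : ℝ} (hβ : 0 < β) {u : ES N → ℝ} (hu : MemCHolder β u) :
    ∃ C : ℝ, ∀ x h : ES N, |u (x + h) + u (x - h) - 2 * u x| ≤ C * ‖h‖ ^ β := by
  suffices H : ∃ C : ℝ, ∃ φ : ES N → (ES N →L[ℝ] ℝ), ∀ x h : ES N,
      |u (x + h) - u x - φ x h| ≤ C * ‖h‖ ^ β by
    obtain ⟨C, φ, H⟩ := H
    refine ⟨2 * C, fun x h => ?_⟩
    have h1 := abs_le.1 (H x h)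
    have h2 := abs_le.1 (H x (-h))
    rw [norm_neg, map_neg, ← sub_eq_add_neg] at h2
    rw [abs_le]
    constructor <;> linarith
  rcases le_or_gt β 1 with h | h
  · obtain ⟨C, hC⟩ := hu.1 h
    refine ⟨C, fun _ => 0, fun x h => ?_⟩
    have := hC.dist_le (x + h) x
    rw [Real.dist_eq, dist_self_add_left, Real.coe_toNNReal _ hβ.le] at this
    simpa using this
  · obtain ⟨hd, C, hC⟩ := hu.2 h
    refine ⟨C, fun x => fderiv ℝ u x, fun x v => ?_⟩
    have := Convex.norm_image_sub_le_of_norm_fderiv_le' (𝕜 := ℝ) (f := u)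
      (s := Metric.closedBall x ‖v‖) (φ := fderiv ℝ u x) (C := C * ‖v‖ ^ (β - 1)) (x := x)
      (y := x + v) (fun y _ => hd y) (fun y hy => ?_) (convex_closedBall _ _) (by simp) (by simp)
    · rw [add_sub_cancel_left, mul_assoc] at this
      rcases eq_or_ne v 0 with rfl | hv
      · simp [Real.zero_rpow hβ.ne']
      · rwa [← Real.rpow_add_one (norm_ne_zero_iff.2 hv), sub_add_cancel] at this
    · have h1 := hC.dist_le y x
      rw [dist_eq_norm, Real.coe_toNNReal _ (by linarith)] at h1
      refine h1.trans ?_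
      have : dist y x ≤ ‖v‖ := hy
      gcongr

/-! ### The integral identity -/

/-- For a solution `u` of `(-Δ)^s u = e^u`, the function `e^u η`
is integrable and `∫ e^u η = ∫ u · (-Δ)^s η`. -/
theorem integral_identity (N : ℕ) (hN : 1 ≤ N) (s : ℝ) (hs0 : 0 < s) (hs1 : s < 1)
    (u : ES N → ℝ) (hu : IsSolution N s u) :
    MeasureTheory.Integrable (fun x : ES N => Real.exp (u x) * fracEta N s x) volume ∧
    ∀ L : ES N → ℝ, (∀ x : ES N, HasFracLapAt N s (fracEta N s) x (L x)) →
      ∫ x : ES N, Real.exp (u x) * fracEta N s x = ∫ x : ES N, u x * L x := by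
  obtain ⟨⟨σ, hσ, hH⟩, ⟨-, hLs⟩, hsol⟩ := hu
  set q := (N : ℝ) + 2 * s with hq_def
  have hq : (N : ℝ) < q := by linarith
  have hq0 : 0 ≤ q := (Nat.cast_nonneg N).trans hq.le
  have hum := (hH.continuous (by linarith)).aestronglyMeasurable (μ := (volume : Measure (ES N)))
  have huw : Integrable fun x => u x * wt N q x := by
    refine hLs.mono' (hum.mul measurable_wt.aestronglyMeasurable)
      (Eventually.of_forall fun x => ?_)
    rw [norm_mul, Real.norm_of_nonneg (wt_pos x).le, wt, Real.rpow_neg (by positivity),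
      Real.norm_eq_abs, div_eq_mul_inv]
  have hem := (continuous_fracEta N s).aestronglyMeasurable (μ := (volume : Measure (ES N)))
  have heb : ∀ x, |fracEta N s x| ≤ 2 ^ (q / 2) * wt N q x := fun x => by
    rw [abs_of_nonneg (fracEta_nonneg N s x)]; exact fracEta_le N hs0.le x
  have hei : Integrable (fracEta N s) := ((integrable_wt hq).const_mul _).mono' hem
    (Eventually.of_forall heb)
  have hew : Integrable fun x => fracEta N s x * wt N q x := by
    refine hei.mono' (hem.mul measurable_wt.aestronglyMeasurable)
      (Eventually.of_forall fun x => ?_)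
    rw [norm_mul, Real.norm_of_nonneg (wt_pos x).le, Real.norm_of_nonneg (fracEta_nonneg N s x)]
    exact mul_le_of_le_one_right (fracEta_nonneg N s x) (wt_le_one hq0 x)
  have hsymm := fun δ (hδ : 0 < δ) => truncLap_symm (ε := δ) hq hδ hem heb hum huw hew
  obtain ⟨C, hC⟩ := hH.second_diff (by linarith)
  obtain ⟨r, C', hr, hC'⟩ := fracEta_second_diff N hs0
  have hue := (integrable_mul_of_bound hem heb hum huw).const_mul C'
  obtain ⟨hi, ht⟩ := tendsto_integral_truncLap (c := fracC N s) (M := fun _ => C) hN hq one_pos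
    (by linarith : q - N < 2 * σ) hum huw (fun x h _ => hC x h) (fun δ hδ => (hsymm δ hδ).1)
    (hei.mul_const C) (L := fun x => Real.exp (u x))
    (fun x => by simpa only [HasFracLapAt, setIntegral_eq_truncLap] using hsol x)
  simp only [mul_comm (fracEta N s _) (Real.exp _)] at hi ht
  refine ⟨hi, fun L hL => ?_⟩
  obtain ⟨-, ht'⟩ := tendsto_integral_truncLap (c := fracC N s)
    (M := fun x => C' * fracEta N s x) hN hq hr
    (by linarith : q - N < 2) hem hew hC' (fun δ hδ => (hsymm δ hδ).2.1)
    (hue.congr (Eventually.of_forall fun x => by simp only; ring)) (L := L)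
    (fun x => by simpa only [HasFracLapAt, setIntegral_eq_truncLap] using hL x)
  refine tendsto_nhds_unique ht (ht'.congr' ?_)
  filter_upwards [self_mem_nhdsWithin] with δ hδ
  simp only [mul_left_comm _ (fracC N s), integral_const_mul]
  rw [(hsymm δ hδ).2.2]
end
end
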